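/- Let n ≥ 1 and r ≥ 1 be integers and let x, y ∈ [0,∞)^n. If F_{k,r}(x) ≤ F_{k,r}(y) for every integer k with r ≤ k ≤ n·r, then for every real p with 0 < p ≤ 1 one has ∑_{i=1}^n x_i^p ≤ ∑_{i=1}^n y_i^p. -/

import Mathlib

open Finset MeasureTheory

/-- `F n r k x`: the sum over all n-tuples κ of nonnegative integers with `∑ i, κ i = k`
and `max_i κ i ≤ r` of `∏ i, x i ^ κ i / (κ i)!`. -/
noncomputable def F (n r k : ℕ) (x : Fin n → ℝ) : ℝ :=
  ∑ κ ∈ Finset.univ.filter (fun κ : Fin n → Fin (r + 1) => ∑ i, (κ i : ℕ) = k),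
    ∏ i, x i ^ (κ i : ℕ) / (Nat.factorial (κ i : ℕ))

/-- truncated exponential -/
noncomputable def PP (r : ℕ) (s : ℝ) : ℝ :=
  ∑ j : Fin (r + 1), s ^ (j : ℕ) / (Nat.factorial (j : ℕ))

lemma F_small (n r k : ℕ) (hk : k ≤ r) (x : Fin n → ℝ) :
    F n r k x = (∑ i, x i) ^ k / (Nat.factorial k) := by
  rw [Finset.sum_pow_eq_sum_piAntidiag, Finset.sum_div, F]
  refine Finset.sum_bij (fun κ _ i => (κ i : ℕ)) ?_ ?_ ?_ ?_
  · intro κ hκ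
    simpa using hκ
  · intro a _ b _ h
    funext i
    exact Fin.ext (congrFun h i)
  · intro b hb
    simp only [mem_piAntidiag, Finset.mem_univ, implies_true, and_true] at hb
    have hle : ∀ i, b i < r + 1 := fun i => by
      have : b i ≤ univ.sum b := Finset.single_le_sum (f := b) (fun _ _ => Nat.zero_le _) (Finset.mem_univ i)
      omega
    exact ⟨fun i => ⟨b i, hle i⟩, by simpa using hb, rfl⟩
  · intro κ hκ
    simp only [Finset.mem_filter, Finset.mem_univ, true_and] at hκ
    have h := Nat.multinomial_spec Finset.univ (fun i => (κ i : ℕ))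
    rw [hκ] at h
    have h2 : (∏ i, (Nat.factorial (κ i : ℕ) : ℝ)) *
        (Nat.multinomial Finset.univ (fun i => (κ i : ℕ)) : ℝ) = (Nat.factorial k : ℝ) := by
      exact_mod_cast h
    rw [Finset.prod_div_distrib, ← h2]
    have h3 : (∏ i, (Nat.factorial (κ i : ℕ) : ℝ)) ≠ 0 :=
      Finset.prod_ne_zero_iff.2 fun i _ => by positivity
    have h4 : (Nat.multinomial Finset.univ (fun i => (κ i : ℕ)) : ℝ) ≠ 0 := by
      intro h0
      rw [h0, mul_zero] at h2
      exact (Nat.factorial_ne_zero k) (by exact_mod_cast h2.symm)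
    field_simp

lemma prod_PP (n r : ℕ) (x : Fin n → ℝ) (t : ℝ) :
    ∏ i, PP r (x i * t) = ∑ k ∈ Finset.range (n * r + 1), F n r k x * t ^ k := by
  unfold PP F
  rw [Fintype.prod_sum, ← Finset.sum_fiberwise_of_maps_to
    (t := Finset.range (n * r + 1)) (g := fun κ : Fin n → Fin (r + 1) => ∑ i, (κ i : ℕ))]
  · refine Finset.sum_congr rfl fun k _ => ?_
    rw [Finset.sum_mul]
    refine Finset.sum_congr rfl fun κ hκ => ?_
    simp only [Finset.mem_filter, Finset.mem_univ, true_and] at hκ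
    rw [← hκ, ← Finset.prod_pow_eq_pow_sum, ← Finset.prod_mul_distrib]
    refine Finset.prod_congr rfl fun i _ => ?_
    rw [mul_pow]; ring
  · intro κ _
    rw [Finset.mem_range, Nat.lt_succ_iff]
    calc ∑ i, (κ i : ℕ) ≤ ∑ _i : Fin n, r := Finset.sum_le_sum fun i _ => by omega
      _ = n * r := by simp

lemma PP_ge (r : ℕ) (hr : 1 ≤ r) (s : ℝ) (hs : 0 ≤ s) : 1 + s ≤ PP r s := by
  unfold PP
  rw [Fin.sum_univ_eq_sum_range (fun j => s ^ j / (Nat.factorial j : ℝ))]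
  calc 1 + s = ∑ j ∈ Finset.range 2, s ^ j / (Nat.factorial j : ℝ) := by
        simp [Finset.sum_range_succ]
    _ ≤ _ := Finset.sum_le_sum_of_subset_of_nonneg
      (Finset.range_mono (by omega)) (fun _ _ _ => by positivity)

lemma PP_le_exp (r : ℕ) (s : ℝ) (hs : 0 ≤ s) : PP r s ≤ Real.exp s := by
  unfold PP
  rw [Fin.sum_univ_eq_sum_range (fun j => s ^ j / (Nat.factorial j : ℝ))]
  exact Real.sum_le_exp_of_nonneg hs _

lemma PP_le_pow (r : ℕ) (s : ℝ) (hs : 1 ≤ s) : PP r s ≤ (r + 1) * s ^ r := by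
  unfold PP
  calc _ ≤ ∑ _j : Fin (r + 1), s ^ r := Finset.sum_le_sum fun j _ => by
        have h1 : (1 : ℝ) ≤ Nat.factorial (j : ℕ) := by
          exact_mod_cast Nat.succ_le_of_lt (Nat.factorial_pos _)
        exact (div_le_self (by positivity) h1).trans (pow_le_pow_right₀ hs (by omega))
    _ = _ := by simp

lemma PP_cont (r : ℕ) : Continuous (PP r) := by
  unfold PP; fun_prop

/-- integrand -/
noncomputable def gg (r : ℕ) (p s : ℝ) : ℝ := Real.log (PP r s) * s ^ (-1 - p)

lemma gg_pos (r : ℕ) (hr : 1 ≤ r) (p s : ℝ) (hs : 0 < s) : 0 < gg r p s := by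
  have := PP_ge r hr s hs.le
  exact mul_pos (Real.log_pos (by linarith)) (Real.rpow_pos_of_pos hs _)

lemma gg_int (r : ℕ) (hr : 1 ≤ r) (p : ℝ) (hp : 0 < p) (hp1 : p < 1) :
    IntegrableOn (gg r p) (Set.Ioi 0) := by
  have hmeas : Measurable (gg r p) := by
    unfold gg
    exact (Real.measurable_log.comp (PP_cont r).measurable).mul (by fun_prop)
  rw [← Set.Ioc_union_Ioi_eq_Ioi (zero_le_one (α := ℝ))]
  refine IntegrableOn.union ?_ ?_
  · have h := (intervalIntegral.intervalIntegrable_rpow' (a := 0) (b := 1) (r := -p)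
      (by linarith))
    rw [intervalIntegrable_iff_integrableOn_Ioc_of_le zero_le_one] at h
    refine Integrable.mono' h hmeas.aestronglyMeasurable ?_
    refine ae_restrict_of_forall_mem measurableSet_Ioc fun s hs => ?_
    have hs0 : 0 < s := hs.1
    rw [Real.norm_of_nonneg (gg_pos r hr p s hs0).le]
    have h1 := PP_ge r hr s hs0.le
    have h2 : Real.log (PP r s) ≤ s := by
      rw [Real.log_le_iff_le_exp (by linarith)]
      exact PP_le_exp r s hs0.le
    calc gg r p s ≤ s * s ^ (-1 - p) := by unfold gg; gcongr
      _ = s ^ (-p) := by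
        nth_rewrite 1 [← Real.rpow_one s]
        rw [← Real.rpow_add hs0]; congr 1; ring
  · have h := (integrableOn_Ioi_rpow_of_lt (a := -1 - p / 2) (by linarith) one_pos).const_mul
      (Real.log (r + 1) + r * (2 / p))
    refine Integrable.mono' h hmeas.aestronglyMeasurable ?_
    refine ae_restrict_of_forall_mem measurableSet_Ioi fun s hs => ?_
    have hs1 : 1 < s := hs
    have hs0 : 0 < s := by linarith
    rw [Real.norm_of_nonneg (gg_pos r hr p s hs0).le]
    have h1 := PP_ge r hr s hs0.le
    have h2 : Real.log (PP r s) ≤ (Real.log (r + 1) + r * (2 / p)) * s ^ (p / 2) := by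
      have h3 : Real.log s ≤ s ^ (p / 2) / (p / 2) := Real.log_le_rpow_div hs0.le (by positivity)
      have h4 : 1 ≤ s ^ (p / 2) := Real.one_le_rpow hs1.le (by positivity)
      have h5 : 0 ≤ Real.log ((r : ℝ) + 1) := Real.log_nonneg (by linarith [Nat.cast_nonneg (α := ℝ) r])
      calc Real.log (PP r s) ≤ Real.log ((r + 1) * s ^ r) :=
            Real.log_le_log (by linarith) (PP_le_pow r s hs1.le)
        _ = Real.log (r + 1) + r * Real.log s := by
            rw [Real.log_mul (by positivity) (by positivity), Real.log_pow]
        _ ≤ Real.log (r + 1) * s ^ (p / 2) + r * (s ^ (p / 2) / (p / 2)) := by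
            gcongr
            exact le_mul_of_one_le_right h5 h4
        _ = _ := by field_simp
    calc gg r p s ≤ (Real.log (r + 1) + r * (2 / p)) * s ^ (p / 2) * s ^ (-1 - p) := by
          unfold gg; gcongr
      _ = _ := by
        rw [mul_assoc, ← Real.rpow_add hs0]; congr 2; ring

lemma gg_integral_pos (r : ℕ) (hr : 1 ≤ r) (p : ℝ) (hp : 0 < p) (hp1 : p < 1) :
    0 < ∫ s in Set.Ioi 0, gg r p s := by
  rw [setIntegral_pos_iff_support_of_nonneg_ae _ (gg_int r hr p hp hp1)]
  · have : Function.support (gg r p) ∩ Set.Ioi 0 = Set.Ioi 0 :=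
      Set.inter_eq_right.2 fun s hs => (gg_pos r hr p s hs).ne'
    rw [this]; simp
  · exact ae_restrict_of_forall_mem measurableSet_Ioi fun s hs => (gg_pos r hr p s hs).le

lemma PP_zero (r : ℕ) (hr : 1 ≤ r) : PP r 0 = 1 := by
  apply le_antisymm
  · simpa using PP_le_exp r 0 le_rfl
  · simpa using PP_ge r hr 0 le_rfl

lemma scale (r : ℕ) (hr : 1 ≤ r) (p : ℝ) (hp : 0 < p) (hp1 : p < 1) (a : ℝ) (ha : 0 ≤ a) :
    IntegrableOn (fun t => Real.log (PP r (a * t)) * t ^ (-1 - p)) (Set.Ioi 0) ∧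
    ∫ t in Set.Ioi 0, Real.log (PP r (a * t)) * t ^ (-1 - p) =
      a ^ p * ∫ s in Set.Ioi 0, gg r p s := by
  rcases ha.eq_or_lt with rfl | ha
  · simp [PP_zero r hr, Real.zero_rpow hp.ne']
  · have heq : Set.EqOn (fun t => a ^ (1 + p) * gg r p (a * t))
        (fun t => Real.log (PP r (a * t)) * t ^ (-1 - p)) (Set.Ioi 0) := by
      intro t ht
      have ht : 0 < t := ht
      simp only [gg]
      rw [Real.mul_rpow ha.le ht.le]
      have : a ^ (1 + p) * a ^ (-1 - p) = 1 := by
        rw [← Real.rpow_add ha]; ring_nf; simp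
      linear_combination (Real.log (PP r (a * t)) * t ^ (-1 - p)) * this
    constructor
    · refine IntegrableOn.congr_fun ?_ heq measurableSet_Ioi
      refine Integrable.const_mul ?_ _
      have := (integrableOn_Ioi_comp_mul_left_iff (gg r p) 0 ha).2
      rw [mul_zero] at this
      exact this (gg_int r hr p hp hp1)
    · rw [← setIntegral_congr_fun measurableSet_Ioi heq, integral_const_mul,
        integral_comp_mul_left_Ioi _ _ ha, mul_zero, smul_eq_mul, ← mul_assoc]
      congr 1
      rw [Real.rpow_add ha, Real.rpow_one]
      field_simp

theorem stmt0 (n r : ℕ) (hn : 1 ≤ n) (hr : 1 ≤ r) (x y : Fin n → ℝ)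
    (hx : ∀ i, 0 ≤ x i) (hy : ∀ i, 0 ≤ y i)
    (hF : ∀ k : ℕ, r ≤ k → k ≤ n * r → F n r k x ≤ F n r k y) :
    ∀ p : ℝ, 0 < p → p ≤ 1 → ∑ i, x i ^ p ≤ ∑ i, y i ^ p := by
  intro p hp hp1
  have hsx : 0 ≤ ∑ i, x i := Finset.sum_nonneg fun i _ => hx i
  have hsy : 0 ≤ ∑ i, y i := Finset.sum_nonneg fun i _ => hy i
  have hsum : ∑ i, x i ≤ ∑ i, y i := by
    have h := hF r le_rfl (Nat.le_mul_of_pos_left r hn)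
    rw [F_small n r r le_rfl, F_small n r r le_rfl,
      div_le_div_iff_of_pos_right (by positivity)] at h
    exact le_of_pow_le_pow_left₀ (by omega) hsy h
  rcases hp1.eq_or_lt with rfl | hp1
  · simpa using hsum
  have hFall : ∀ k ∈ Finset.range (n * r + 1), F n r k x ≤ F n r k y := by
    intro k hk
    rw [Finset.mem_range] at hk
    rcases le_total r k with h | h
    · exact hF k h (by omega)
    · rw [F_small n r k h, F_small n r k h]
      gcongr
  have hpos : ∀ a : ℝ, 0 ≤ a → 0 < PP r a := fun a ha => by
    linarith [PP_ge r hr a ha]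
  have hlog : ∀ t : ℝ, 0 < t → ∑ i, Real.log (PP r (x i * t)) * t ^ (-1 - p) ≤
      ∑ i, Real.log (PP r (y i * t)) * t ^ (-1 - p) := by
    intro t ht
    rw [← Finset.sum_mul, ← Finset.sum_mul,
      ← Real.log_prod (fun i _ => (hpos _ (mul_nonneg (hx i) ht.le)).ne'),
      ← Real.log_prod (fun i _ => (hpos _ (mul_nonneg (hy i) ht.le)).ne')]
    refine mul_le_mul_of_nonneg_right ?_ (Real.rpow_nonneg ht.le _)
    refine Real.log_le_log (Finset.prod_pos fun i _ => hpos _ (mul_nonneg (hx i) ht.le)) ?_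
    rw [prod_PP, prod_PP]
    exact Finset.sum_le_sum fun k hk =>
      mul_le_mul_of_nonneg_right (hFall k hk) (by positivity)
  have hc := gg_integral_pos r hr p hp hp1
  refine le_of_mul_le_mul_right ?_ hc
  have key : ∀ z : Fin n → ℝ, (∀ i, 0 ≤ z i) →
      (∑ i, z i ^ p) * ∫ s in Set.Ioi 0, gg r p s =
      ∫ t in Set.Ioi 0, ∑ i, Real.log (PP r (z i * t)) * t ^ (-1 - p) := by
    intro z hz
    rw [integral_finsetSum _ fun i _ => (scale r hr p hp hp1 (z i) (hz i)).1, Finset.sum_mul]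
    exact Finset.sum_congr rfl fun i _ => (scale r hr p hp hp1 (z i) (hz i)).2.symm
  rw [key x hx, key y hy]
  refine setIntegral_mono_on ?_ ?_ measurableSet_Ioi fun t ht => hlog t ht
  · exact integrable_finsetSum _ fun i _ => (scale r hr p hp hp1 (x i) (hx i)).1
  · exact integrable_finsetSum _ fun i _ => (scale r hr p hp hp1 (y i) (hy i)).1
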